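/- Proposition: Let (α_n)_{n∈ℕ} be matrices in ℍ^{N×N} with Σ_n ‖α_n‖ ρⁿ < ∞ and with α₀ invertible, and define b_{n,m} := Σ_{i=0}^{n} Σ_{j=0}^{m} α_i a_{n−i,m−j} α_j* ∈ ℍ^{N×N} (these are the coefficients of the kernel B(p,q) = α(p) ⋆ K(p,q) ⋆_r α(q)*, where α(p) = Σ_n pⁿ α_n). Then b_{n,m} = b_{m,n}*, the series Σ_{n,m} ‖b_{n,m}‖ ρ^{n+m} converges, and for every κ ∈ ℕ the kernel B(p,q) := Σ_{n,m≥0} pⁿ b_{n,m} q̄^m has κ negative squares in B_ρ if and only if K(p,q) has κ negative squares in B_ρ. -/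

import Mathlib

/- Setting: quaternionic hermitian kernels of the form `K(p,q) = Σ pⁿ a_{n,m} q̄^m`.
Column vectors `ι → ℍ` form a right `ℍ`-vector space (a module over `ℍᵐᵒᵖ`).  For a
Hermitian matrix `H`, `v* H v = star v ⬝ᵥ H.mulVec v` is real, and the negativity
index `ν₋(H)` is the largest dimension of a right subspace on which the quadratic
form `v ↦ (v* H v).re` is negative definite. -/

open Quaternion MulOpposite Matrix

attribute [local instance] Matrix.normedAddCommGroup

/-- The negativity index `ν₋(H)`: the largest dimension of a right `ℍ`-subspace on
which the Hermitian form of `H` is strictly negative. -/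
noncomputable def negIndex {ι : Type*} [Fintype ι] (H : Matrix ι ι ℍ[ℝ]) : ℕ :=
  sSup {d : ℕ | ∃ W : Submodule ℍ[ℝ]ᵐᵒᵖ (ι → ℍ[ℝ]),
      Module.finrank ℍ[ℝ]ᵐᵒᵖ W = d ∧
      ∀ v ∈ W, v ≠ 0 → (star v ⬝ᵥ H.mulVec v).re < 0}

/-- The kernel `K(p,q) = Σ_{n,m≥0} pⁿ a_{n,m} q̄^m` built from the coefficient
matrices `a_{n,m}`. -/
noncomputable def kerK {N : ℕ} (a : ℕ → ℕ → Matrix (Fin N) (Fin N) ℍ[ℝ])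
    (p q : ℍ[ℝ]) : Matrix (Fin N) (Fin N) ℍ[ℝ] :=
  fun i j => ∑' nm : ℕ × ℕ, p ^ nm.1 * a nm.1 nm.2 i j * (star q) ^ nm.2

/-- The Gram block matrix `G(p₁,…,p_k) = (K(p_i,p_j))_{i,j}` of a kernel `K` at a
finite tuple of points. -/
noncomputable def gram {N k : ℕ} (K : ℍ[ℝ] → ℍ[ℝ] → Matrix (Fin N) (Fin N) ℍ[ℝ])
    (p : Fin k → ℍ[ℝ]) : Matrix (Fin k × Fin N) (Fin k × Fin N) ℍ[ℝ] :=
  fun x y => K (p x.1) (p y.1) x.2 y.2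

/-- `K` has `κ` negative squares in the ball `B_r`: all Gram block matrices at tuples
of points of `B_r` have `ν₋ ≤ κ`, with equality for at least one tuple. -/
noncomputable def hasNegSquares {N : ℕ} (a : ℕ → ℕ → Matrix (Fin N) (Fin N) ℍ[ℝ])
    (r : ℝ) (κ : ℕ) : Prop :=
  (∀ (k : ℕ) (p : Fin k → ℍ[ℝ]), (∀ i, ‖p i‖ < r) → negIndex (gram (kerK a) p) ≤ κ) ∧
  (∃ (k : ℕ) (p : Fin k → ℍ[ℝ]), (∀ i, ‖p i‖ < r) ∧ negIndex (gram (kerK a) p) = κ)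

/-- The coefficients `b_{n,m} = Σ_{i=0}^{n} Σ_{j=0}^{m} α_i a_{n−i,m−j} α_j*` of the
kernel `B(p,q) = α(p) ⋆ K(p,q) ⋆_r α(q)*`, where `α(p) = Σ pⁿ αₙ`. -/
noncomputable def bCoef {N : ℕ} (α : ℕ → Matrix (Fin N) (Fin N) ℍ[ℝ])
    (a : ℕ → ℕ → Matrix (Fin N) (Fin N) ℍ[ℝ]) (n m : ℕ) : Matrix (Fin N) (Fin N) ℍ[ℝ] :=
  ∑ i ∈ Finset.range (n + 1), ∑ j ∈ Finset.range (m + 1),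
    α i * a (n - i) (m - j) * (α j)ᴴ


/-! ### Negativity index -/

theorem quat_finite_op : Module.Finite ℍ[ℝ]ᵐᵒᵖ ℍ[ℝ] := by
  refine ⟨⟨{1}, ?_⟩⟩
  rw [eq_top_iff]
  intro x _
  have : x = (op x) • (1 : ℍ[ℝ]) := by simp
  rw [this]
  exact Submodule.smul_mem _ _ (Submodule.subset_span (by simp))

theorem negIndex_bdd {ι : Type*} [Fintype ι] (H : Matrix ι ι ℍ[ℝ]) :
    BddAbove {d : ℕ | ∃ W : Submodule ℍ[ℝ]ᵐᵒᵖ (ι → ℍ[ℝ]),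
      Module.finrank ℍ[ℝ]ᵐᵒᵖ W = d ∧
      ∀ v ∈ W, v ≠ 0 → (star v ⬝ᵥ H.mulVec v).re < 0} := by
  have := quat_finite_op
  refine ⟨Module.finrank ℍ[ℝ]ᵐᵒᵖ (ι → ℍ[ℝ]), ?_⟩
  rintro d ⟨W, rfl, -⟩
  exact Submodule.finrank_le W

theorem negIndex_attained {ι : Type*} [Fintype ι] (H : Matrix ι ι ℍ[ℝ]) :
    ∃ W : Submodule ℍ[ℝ]ᵐᵒᵖ (ι → ℍ[ℝ]),
      Module.finrank ℍ[ℝ]ᵐᵒᵖ W = negIndex H ∧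
      ∀ v ∈ W, v ≠ 0 → (star v ⬝ᵥ H.mulVec v).re < 0 := by
  refine Nat.sSup_mem (s := {d : ℕ | ∃ W : Submodule ℍ[ℝ]ᵐᵒᵖ (ι → ℍ[ℝ]),
      Module.finrank ℍ[ℝ]ᵐᵒᵖ W = d ∧
      ∀ v ∈ W, v ≠ 0 → (star v ⬝ᵥ H.mulVec v).re < 0}) ⟨0, ⊥, by simp, ?_⟩ (negIndex_bdd H)
  intro v hv h
  exact absurd ((Submodule.mem_bot _).1 hv) h

/-- Left multiplication by a matrix as a right-linear map. -/
noncomputable def mulVecOp {ι κ : Type*} [Fintype ι] (P : Matrix κ ι ℍ[ℝ]) :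
    (ι → ℍ[ℝ]) →ₗ[ℍ[ℝ]ᵐᵒᵖ] (κ → ℍ[ℝ]) where
  toFun v := P.mulVec v
  map_add' := Matrix.mulVec_add P
  map_smul' c v := by
    funext x
    simp [Matrix.mulVec, dotProduct, Finset.sum_mul, mul_assoc]

theorem form_congr {ι κ : Type*} [Fintype ι] [Fintype κ] (G : Matrix κ κ ℍ[ℝ])
    (P : Matrix κ ι ℍ[ℝ]) (v : ι → ℍ[ℝ]) :
    star v ⬝ᵥ (Pᴴ * G * P).mulVec v = star (P.mulVec v) ⬝ᵥ G.mulVec (P.mulVec v) := by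
  rw [Matrix.star_mulVec, ← Matrix.mulVec_mulVec, ← Matrix.mulVec_mulVec,
    Matrix.dotProduct_mulVec]

theorem finrank_le_negIndex {ι κ : Type*} [Fintype ι] [Fintype κ] (G : Matrix κ κ ℍ[ℝ])
    (P : Matrix κ ι ℍ[ℝ]) (W : Submodule ℍ[ℝ]ᵐᵒᵖ (ι → ℍ[ℝ]))
    (hW : ∀ v ∈ W, v ≠ 0 → (star v ⬝ᵥ (Pᴴ * G * P).mulVec v).re < 0) :
    Module.finrank ℍ[ℝ]ᵐᵒᵖ W ≤ negIndex G := by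
  refine le_csSup (negIndex_bdd G) ⟨W.map (mulVecOp P), ?_, ?_⟩
  · have hinj : Function.Injective ((mulVecOp P).domRestrict W) := by
      rw [injective_iff_map_eq_zero]
      rintro ⟨v, hv⟩ h
      by_contra hne
      have h1 := hW v hv (fun h0 => hne (by ext1; exact h0))
      have h2 : P.mulVec v = 0 := h
      rw [form_congr, h2] at h1
      simp at h1
    have h2 : W.map (mulVecOp P) = LinearMap.range ((mulVecOp P).domRestrict W) := by
      rw [LinearMap.range_domRestrict]
    rw [h2]
    exact LinearMap.finrank_range_of_inj hinj
  · rintro _ ⟨v, hv, rfl⟩ hne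
    have hv0 : v ≠ 0 := by
      rintro rfl
      exact hne (map_zero _)
    have := hW v hv hv0
    rw [form_congr] at this
    exact this

theorem negIndex_congr_le {ι κ : Type*} [Fintype ι] [Fintype κ] (G : Matrix κ κ ℍ[ℝ])
    (P : Matrix κ ι ℍ[ℝ]) : negIndex (Pᴴ * G * P) ≤ negIndex G := by
  obtain ⟨W, h1, h2⟩ := negIndex_attained (Pᴴ * G * P)
  rw [← h1]
  exact finrank_le_negIndex G P W h2

/-- Negativity on a fixed subspace is an open condition. -/
theorem neg_open {ι : Type*} [Fintype ι] (G : Matrix ι ι ℍ[ℝ])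
    (W : Submodule ℍ[ℝ]ᵐᵒᵖ (ι → ℍ[ℝ]))
    (hW : ∀ v ∈ W, v ≠ 0 → (star v ⬝ᵥ G.mulVec v).re < 0) :
    ∃ ε > 0, ∀ H : Matrix ι ι ℍ[ℝ], (∀ x y, ‖H x y - G x y‖ ≤ ε) →
      ∀ v ∈ W, v ≠ 0 → (star v ⬝ᵥ H.mulVec v).re < 0 := by
  have hsm : ∀ (r : ℝ) (v : ι → ℍ[ℝ]), r • v = op (r : ℍ[ℝ]) • v := by
    intro r v
    ext1 x
    simp only [Pi.smul_apply, op_smul_eq_mul]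
    rw [← Quaternion.coe_mul_eq_smul, Quaternion.coe_commutes]
  let V : Submodule ℝ (ι → ℍ[ℝ]) :=
    { carrier := W
      add_mem' := fun h1 h2 => W.add_mem h1 h2
      zero_mem' := W.zero_mem
      smul_mem' := fun r v hv => by
        rw [hsm]
        exact W.smul_mem _ hv }
  have hcl : IsClosed (W : Set (ι → ℍ[ℝ])) := V.closed_of_finiteDimensional
  have hK : IsCompact (Metric.sphere (0 : ι → ℍ[ℝ]) 1 ∩ W) :=
    (isCompact_sphere _ _).inter_right hcl
  have hcont : Continuous fun z : Matrix ι ι ℍ[ℝ] × (ι → ℍ[ℝ]) =>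
      (star z.2 ⬝ᵥ z.1.mulVec z.2).re := by
    apply Quaternion.continuous_re.comp
    fun_prop
  have hev : ∀ᶠ H in nhds G, ∀ v ∈ Metric.sphere (0 : ι → ℍ[ℝ]) 1 ∩ W,
      (star v ⬝ᵥ H.mulVec v).re < 0 := by
    apply hK.eventually_forall_of_forall_eventually
    rintro v ⟨hv1, hv2⟩
    apply hcont.continuousAt.eventually_lt_const
    apply hW v hv2
    rintro rfl
    simp at hv1
  obtain ⟨ε, hε, h⟩ := Metric.eventually_nhds_iff.1 hev
  refine ⟨ε / 2, by positivity, fun H hH v hv hv0 => ?_⟩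
  have hd : dist H G < ε := by
    rw [dist_eq_norm]
    refine lt_of_le_of_lt ((Matrix.norm_le_iff (r := ε / 2) (by positivity)).2 ?_) (by linarith)
    intro x y
    exact hH x y
  have hn : 0 < ‖v‖ := norm_pos_iff.2 hv0
  have h3 := h hd (‖v‖⁻¹ • v) ⟨by simp [norm_smul, hn.ne'], by
    rw [hsm]; exact W.smul_mem _ hv⟩
  have hst : star (‖v‖⁻¹ • v) = ‖v‖⁻¹ • star v := by
    funext x
    simp
  rw [hst, Matrix.mulVec_smul, smul_dotProduct, dotProduct_smul] at h3
  simp only [Quaternion.re_smul, smul_eq_mul] at h3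
  have hi : 0 < ‖v‖⁻¹ := inv_pos.2 hn
  by_contra hc
  push Not at hc
  have : 0 ≤ ‖v‖⁻¹ * (‖v‖⁻¹ * (star v ⬝ᵥ H.mulVec v).re) := by positivity
  linarith

/-! ### Approximation of sequences by real geometric sequences -/

/-- `f` is a uniform limit of combinations of geometric sequences with small real ratios. -/
def SeqApprox (δ : ℝ) (f : ℕ → ℍ[ℝ]) : Prop :=
  ∀ ε > 0, ∃ c : ℝ →₀ ℍ[ℝ], (∀ s ∈ c.support, |s| < δ) ∧
    ∀ m, ‖c.sum (fun s P => (s ^ m) • P) - f m‖ ≤ ε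

theorem SeqApprox.add {δ : ℝ} {f g : ℕ → ℍ[ℝ]} (hf : SeqApprox δ f) (hg : SeqApprox δ g) :
    SeqApprox δ (fun m => f m + g m) := by
  classical
  intro ε hε
  obtain ⟨c, hc, hc'⟩ := hf (ε / 2) (by positivity)
  obtain ⟨d, hd, hd'⟩ := hg (ε / 2) (by positivity)
  refine ⟨c + d, fun s hs => ?_, fun m => ?_⟩
  · rcases Finset.mem_union.1 (Finsupp.support_add hs) with h | h
    · exact hc s h
    · exact hd s h
  · rw [Finsupp.sum_add_index' (by simp) (by simp)]
    calc _ = ‖(c.sum (fun s P => (s ^ m) • P) - f m) + (d.sum (fun s P => (s ^ m) • P) - g m)‖ := by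
            rw [add_sub_add_comm]
      _ ≤ _ := norm_add_le _ _
      _ ≤ ε / 2 + ε / 2 := add_le_add (hc' m) (hd' m)
      _ = ε := by ring

theorem SeqApprox.mul_right {δ : ℝ} {f : ℕ → ℍ[ℝ]} (hf : SeqApprox δ f) (q : ℍ[ℝ]) :
    SeqApprox δ (fun m => f m * q) := by
  intro ε hε
  obtain ⟨c, hc, hc'⟩ := hf (ε / (‖q‖ + 1)) (by positivity)
  refine ⟨c.mapRange (fun P => P * q) (by simp), fun s hs => ?_, fun m => ?_⟩
  · exact hc s (Finsupp.support_mapRange hs)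
  · rw [Finsupp.sum_mapRange_index (by simp)]
    have : (c.sum fun a b => a ^ m • (b * q)) - f m * q
        = (c.sum (fun s P => (s ^ m) • P) - f m) * q := by
      rw [sub_mul, Finsupp.sum, Finsupp.sum, Finset.sum_mul]
      simp
    rw [this, norm_mul]
    calc _ ≤ ε / (‖q‖ + 1) * ‖q‖ := by gcongr; exact hc' m
      _ ≤ ε / (‖q‖ + 1) * (‖q‖ + 1) := by gcongr; linarith
      _ = ε := by field_simp

theorem SeqApprox.zero (δ : ℝ) : SeqApprox δ (fun _ => 0) :=
  fun ε hε => ⟨0, by simp, by simp [hε.le]⟩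

theorem SeqApprox.sum {δ : ℝ} {f : ℕ → ℕ → ℍ[ℝ]} (T : Finset ℕ)
    (hf : ∀ i ∈ T, SeqApprox δ (f i)) :
    SeqApprox δ (fun m => ∑ i ∈ T, f i m) := by
  classical
  induction T using Finset.induction_on with
  | empty => simpa using SeqApprox.zero δ
  | insert i T hi ih =>
    simp only [Finset.sum_insert hi]
    exact (hf i (by simp)).add (ih fun j hj => hf j (by simp [hj]))

theorem SeqApprox.limit {δ : ℝ} {f : ℕ → ℍ[ℝ]}
    (h : ∀ ε > 0, ∃ g, SeqApprox δ g ∧ ∀ m, ‖g m - f m‖ ≤ ε) : SeqApprox δ f := by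
  intro ε hε
  obtain ⟨g, hg, hg'⟩ := h (ε / 2) (by positivity)
  obtain ⟨c, hc, hc'⟩ := hg (ε / 2) (by positivity)
  refine ⟨c, hc, fun m => ?_⟩
  calc _ = ‖(c.sum (fun s P => (s ^ m) • P) - g m) + (g m - f m)‖ := by
          congr 1; abel
    _ ≤ _ := norm_add_le _ _
    _ ≤ ε / 2 + ε / 2 := add_le_add (hc' m) (hg' m)
    _ = ε := by ring

theorem SeqApprox.geom {δ s : ℝ} (hs : |s| < δ) :
    SeqApprox δ (fun m => ((s ^ m : ℝ) : ℍ[ℝ])) := by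
  intro ε hε
  refine ⟨Finsupp.single s 1, fun t ht => ?_, fun m => ?_⟩
  · have := Finsupp.support_single_subset ht
    simp at this
    rwa [this]
  · rw [Finsupp.sum_single_index (by simp)]
    have : s ^ m • (1 : ℍ[ℝ]) - ((s ^ m : ℝ) : ℍ[ℝ]) = 0 := by
      rw [← Quaternion.coe_mul_eq_smul]; simp
    rw [this]
    simpa using hε.le

theorem SeqApprox.unit {δ : ℝ} (hδ : 0 < δ) (k : ℕ) :
    SeqApprox δ (fun m => if m = k then 1 else 0) := by
  induction k using Nat.strong_induction_on with
  | _ k ih =>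
  apply SeqApprox.limit
  intro ε hε
  obtain ⟨s, hs0, hs⟩ : ∃ s : ℝ, 0 < s ∧ s < min (min δ 1) ε :=
    exists_between (by positivity)
  have hsδ : s < δ := lt_of_lt_of_le hs ((min_le_left _ _).trans (min_le_left _ _))
  have hs1 : s < 1 := lt_of_lt_of_le hs ((min_le_left _ _).trans (min_le_right _ _))
  have hsε : s < ε := lt_of_lt_of_le hs (min_le_right _ _)
  refine ⟨_, ((SeqApprox.geom (δ := δ) (s := s) (by rwa [abs_of_pos hs0])).add
    (SeqApprox.sum (Finset.range k) (fun i hi => (ih i (Finset.mem_range.1 hi)).mul_right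
      ((-s ^ i : ℝ) : ℍ[ℝ])))).mul_right ((s ^ k : ℝ)⁻¹ : ℝ), fun m => ?_⟩
  simp only [ite_mul, one_mul, zero_mul, Finset.sum_ite_eq, Finset.mem_range]
  have hsk : (s : ℝ) ^ k ≠ 0 := by positivity
  rcases lt_trichotomy m k with h | h | h
  · have : m ≠ k := by omega
    simp [h, this, hε.le]
  · subst h
    rw [if_neg (lt_irrefl _), if_pos rfl, add_zero, ← Quaternion.coe_mul, mul_inv_cancel₀ hsk]
    simp [hε.le]
  · have h1 : m ≠ k := by omega
    obtain ⟨j, rfl⟩ : ∃ j, m = k + (j + 1) := ⟨m - k - 1, by omega⟩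
    rw [if_neg (by omega), if_neg h1, add_zero, sub_zero, ← Quaternion.coe_mul,
      Quaternion.norm_coe, pow_add, mul_comm, ← mul_assoc, inv_mul_cancel₀ hsk, one_mul,
      Real.norm_of_nonneg (by positivity), pow_succ]
    have : s ^ j ≤ 1 := pow_le_one₀ hs0.le hs1.le
    nlinarith

theorem SeqApprox.pow {δ : ℝ} (hδ : 0 < δ) (z : ℍ[ℝ]) (hz : ‖z‖ < 1) :
    SeqApprox δ (fun m => z ^ m) := by
  apply SeqApprox.limit
  intro ε hε
  obtain ⟨M, hM⟩ := exists_pow_lt_of_lt_one hε hz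
  refine ⟨_, SeqApprox.sum (Finset.range M) (fun i _ => (SeqApprox.unit hδ i).mul_right (z ^ i)),
    fun m => ?_⟩
  simp only [ite_mul, one_mul, zero_mul, Finset.sum_ite_eq, Finset.mem_range]
  split_ifs with h
  · simp [hε.le]
  · rw [zero_sub, norm_neg, norm_pow]
    exact (pow_le_pow_of_le_one (norm_nonneg _) hz.le (by omega)).trans hM.le

/-- Simultaneous approximation of the geometric sequences of `star (p j)`. -/
theorem exists_real_points {k : ℕ} {ρ δ ε : ℝ} (hρ : 0 < ρ) (hδ : 0 < δ) (hε : 0 < ε)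
    (p : Fin k → ℍ[ℝ]) (hp : ∀ i, ‖p i‖ < ρ) :
    ∃ (k' : ℕ) (t : Fin k' → ℝ) (P : Matrix (Fin k') (Fin k) ℍ[ℝ]), (∀ l, |t l| < δ) ∧
      ∀ j m, ‖∑ l, (t l ^ m) • P l j - star (p j) ^ m‖ ≤ ε * ρ ^ m := by
  classical
  have h : ∀ j, SeqApprox (δ / ρ) (fun m => (ρ⁻¹ • star (p j)) ^ m) := by
    intro j
    apply SeqApprox.pow (by positivity)
    rw [norm_smul, Quaternion.norm_star, Real.norm_of_nonneg (by positivity), inv_mul_lt_iff₀ hρ]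
    simpa using hp j
  choose c hc hc' using fun j => h j ε hε
  let T : Finset ℝ := Finset.univ.biUnion fun j => (c j).support
  let e := T.equivFin
  refine ⟨T.card, fun l => ρ * (e.symm l : ℝ), fun l j => c j (e.symm l : ℝ), fun l => ?_,
    fun j m => ?_⟩
  · obtain ⟨j, -, hj⟩ := Finset.mem_biUnion.1 (e.symm l).2
    have := hc j _ hj
    rw [abs_mul, abs_of_pos hρ]
    rwa [lt_div_iff₀ hρ, mul_comm] at this
  · have h1 : ∑ l, ((ρ * (e.symm l : ℝ)) ^ m) • c j (e.symm l : ℝ)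
        = (ρ ^ m) • (c j).sum (fun s P => (s ^ m) • P) := by
      rw [Equiv.sum_comp e.symm (fun s : T => ((ρ * (s : ℝ)) ^ m) • c j (s : ℝ)),
        Finset.sum_coe_sort T (fun s : ℝ => ((ρ * s) ^ m) • c j s),
        Finsupp.sum_of_support_subset (s := T) _ _ _ (by simp), Finset.smul_sum]
      · simp [mul_pow, mul_smul]
      · exact Finset.subset_biUnion_of_mem (fun j => (c j).support) (Finset.mem_univ j)
    have h2 : star (p j) ^ m = ρ ^ m • (ρ⁻¹ • star (p j)) ^ m := by
      rw [smul_pow, smul_smul, ← mul_pow, mul_inv_cancel₀ hρ.ne', one_pow, one_smul]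
    rw [h1, h2, ← smul_sub, norm_smul, Real.norm_of_nonneg (by positivity), mul_comm]
    gcongr
    exact hc' j m

/-! ### Gram matrices at real points -/

theorem form_summable {N : ℕ} {a : ℕ → ℕ → Matrix (Fin N) (Fin N) ℍ[ℝ]} {ρ : ℝ} (hρ : 0 < ρ)
    (hsum : Summable fun nm : ℕ × ℕ => ‖a nm.1 nm.2‖ * ρ ^ (nm.1 + nm.2))
    (x y : Fin N) {u v : ℕ → ℍ[ℝ]} {C D : ℝ} (hC : 0 ≤ C)
    (hu : ∀ n, ‖u n‖ ≤ C * ρ ^ n) (hv : ∀ n, ‖v n‖ ≤ D * ρ ^ n) :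
    (∀ nm : ℕ × ℕ, ‖u nm.1 * a nm.1 nm.2 x y * v nm.2‖ ≤
      C * D * (‖a nm.1 nm.2‖ * ρ ^ (nm.1 + nm.2))) ∧
    Summable fun nm : ℕ × ℕ => u nm.1 * a nm.1 nm.2 x y * v nm.2 := by
  have h : ∀ nm : ℕ × ℕ, ‖u nm.1 * a nm.1 nm.2 x y * v nm.2‖ ≤
      C * D * (‖a nm.1 nm.2‖ * ρ ^ (nm.1 + nm.2)) := by
    intro nm
    rw [norm_mul, norm_mul]
    have h1 : ‖a nm.1 nm.2 x y‖ ≤ ‖a nm.1 nm.2‖ := Matrix.norm_entry_le_entrywise_sup_norm _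
    calc _ ≤ (C * ρ ^ nm.1) * ‖a nm.1 nm.2‖ * (D * ρ ^ nm.2) := by
            gcongr
            · exact hu _
            · exact hv _
      _ = _ := by rw [pow_add]; ring
  exact ⟨h, Summable.of_norm_bounded (hsum.mul_left (C * D)) h⟩

theorem form_close {N : ℕ} {a : ℕ → ℕ → Matrix (Fin N) (Fin N) ℍ[ℝ]} {ρ : ℝ} (hρ : 0 < ρ)
    (hsum : Summable fun nm : ℕ × ℕ => ‖a nm.1 nm.2‖ * ρ ^ (nm.1 + nm.2))
    (x y : Fin N) {u v u' v' : ℕ → ℍ[ℝ]} {ε : ℝ} (hε : 0 ≤ ε) (hε1 : ε ≤ 1)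
    (hu : ∀ n, ‖u n‖ ≤ ρ ^ n) (hv : ∀ n, ‖v n‖ ≤ ρ ^ n)
    (hu' : ∀ n, ‖u' n - u n‖ ≤ ε * ρ ^ n) (hv' : ∀ n, ‖v' n - v n‖ ≤ ε * ρ ^ n) :
    ‖(∑' nm : ℕ × ℕ, u' nm.1 * a nm.1 nm.2 x y * v' nm.2) -
      ∑' nm : ℕ × ℕ, u nm.1 * a nm.1 nm.2 x y * v nm.2‖ ≤
      3 * ε * ∑' nm : ℕ × ℕ, ‖a nm.1 nm.2‖ * ρ ^ (nm.1 + nm.2) := by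
  have h2 : ∀ {w w' : ℕ → ℍ[ℝ]}, (∀ n, ‖w n‖ ≤ ρ ^ n) → (∀ n, ‖w' n - w n‖ ≤ ε * ρ ^ n) →
      ∀ n, ‖w' n‖ ≤ 2 * ρ ^ n := by
    intro w w' hw hw' n
    have h3 : ‖w' n‖ ≤ ‖w n‖ + ‖w' n - w n‖ := by
      have := norm_add_le (w n) (w' n - w n)
      rwa [add_sub_cancel] at this
    have h4 : ε * ρ ^ n ≤ 1 * ρ ^ n := by gcongr
    linarith [hw n, hw' n]
  have hu1 : ∀ n, ‖u n‖ ≤ 1 * ρ ^ n := by simpa using hu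
  have hv1 : ∀ n, ‖v n‖ ≤ 1 * ρ ^ n := by simpa using hv
  have s1 := (form_summable hρ hsum x y zero_le_two (h2 hu hu') (h2 hv hv')).2
  have s2 := (form_summable hρ hsum x y zero_le_one hu1 hv1).2
  have b1 := (form_summable hρ hsum x y (u := fun n => u' n - u n) hε hu' (h2 hv hv')).1
  have b2 := (form_summable hρ hsum x y (v := fun n => v' n - v n) zero_le_one hu1 hv').1
  rw [← s1.tsum_sub s2]
  refine tsum_of_norm_bounded (hsum.hasSum.mul_left (3 * ε)) fun nm => ?_
  have : u' nm.1 * a nm.1 nm.2 x y * v' nm.2 - u nm.1 * a nm.1 nm.2 x y * v nm.2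
      = (u' nm.1 - u nm.1) * a nm.1 nm.2 x y * v' nm.2
        + u nm.1 * a nm.1 nm.2 x y * (v' nm.2 - v nm.2) := by noncomm_ring
  rw [this]
  refine (norm_add_le _ _).trans ?_
  have c1 := b1 nm
  have c2 := b2 nm
  refine (add_le_add c1 c2).trans (le_of_eq ?_)
  ring

theorem gram_real_congr {N : ℕ} {a : ℕ → ℕ → Matrix (Fin N) (Fin N) ℍ[ℝ]} {ρ : ℝ} (hρ : 0 < ρ)
    (hsum : Summable fun nm : ℕ × ℕ => ‖a nm.1 nm.2‖ * ρ ^ (nm.1 + nm.2))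
    {k k' : ℕ} (t : Fin k' → ℝ) (ht : ∀ l, |t l| ≤ ρ) (P : Matrix (Fin k') (Fin k) ℍ[ℝ])
    (Q : Matrix (Fin k' × Fin N) (Fin k × Fin N) ℍ[ℝ])
    (hQ : ∀ x y, Q x y = if x.2 = y.2 then P x.1 y.1 else 0) (i j : Fin k) (x y : Fin N) :
    (Qᴴ * gram (kerK a) (fun l => (t l : ℍ[ℝ])) * Q) (i, x) (j, y) =
      ∑' nm : ℕ × ℕ, star (∑ l, (t l ^ nm.1) • P l i) * a nm.1 nm.2 x y *
        (∑ l, (t l ^ nm.2) • P l j) := by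
  have h1 : (Qᴴ * gram (kerK a) (fun l => (t l : ℍ[ℝ])) * Q) (i, x) (j, y) =
      ∑ l', (∑ l, star (P l i) * kerK a (t l) (t l') x y) * P l' j := by
    simp only [Matrix.mul_apply, Matrix.conjTranspose_apply, Fintype.sum_prod_type, _root_.gram, hQ]
    simp [apply_ite star, ite_mul, mul_ite]
  rw [h1]
  symm
  apply HasSum.tsum_eq
  have hb : ∀ l n, ‖((t l : ℝ) : ℍ[ℝ]) ^ n‖ ≤ 1 * ρ ^ n := by
    intro l n
    rw [norm_pow, Quaternion.norm_coe, one_mul]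
    gcongr
    exact ht l
  have h2 : ∀ l l', HasSum (fun nm : ℕ × ℕ => (t l : ℍ[ℝ]) ^ nm.1 * a nm.1 nm.2 x y *
      (star (t l' : ℍ[ℝ])) ^ nm.2) (kerK a (t l) (t l') x y) := by
    intro l l'
    refine (form_summable hρ hsum x y (v := fun n => (star (t l' : ℍ[ℝ])) ^ n)
      zero_le_one (hb l) (D := 1) ?_).2.hasSum
    intro n
    rw [Quaternion.star_coe]
    exact hb l' n
  have h3 := hasSum_sum (s := Finset.univ) fun l' _ =>
    (hasSum_sum (s := Finset.univ) fun l _ => (h2 l l').mul_left (star (P l i))).mul_right (P l' j)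
  refine (congrArg (fun f => HasSum f _) (funext fun nm => ?_)).mp h3
  symm
  rw [Finset.mul_sum]
  refine Finset.sum_congr rfl fun l' _ => ?_
  rw [star_sum, Finset.sum_mul, Finset.sum_mul, Finset.sum_mul]
  refine Finset.sum_congr rfl fun l _ => ?_
  rw [Quaternion.star_coe, ← Quaternion.coe_pow, ← Quaternion.coe_pow, Quaternion.coe_mul_eq_smul,
    Quaternion.mul_coe_eq_smul, Quaternion.star_smul]
  simp only [smul_mul_assoc, mul_smul_comm, smul_smul, mul_assoc]

theorem exists_real_gram {N : ℕ} {a : ℕ → ℕ → Matrix (Fin N) (Fin N) ℍ[ℝ]} {ρ : ℝ} (hρ : 0 < ρ)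
    (hsum : Summable fun nm : ℕ × ℕ => ‖a nm.1 nm.2‖ * ρ ^ (nm.1 + nm.2))
    {δ : ℝ} (hδ : 0 < δ) (hδρ : δ ≤ ρ) {k : ℕ} (p : Fin k → ℍ[ℝ]) (hp : ∀ i, ‖p i‖ < ρ) :
    ∃ (k' : ℕ) (t : Fin k' → ℝ), (∀ l, |t l| < δ) ∧
      negIndex (gram (kerK a) p) ≤ negIndex (gram (kerK a) (fun l => (t l : ℍ[ℝ]))) := by
  obtain ⟨W, hW1, hW2⟩ := negIndex_attained (gram (kerK a) p)
  obtain ⟨ε₀, hε₀, hopen⟩ := neg_open _ W hW2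
  set S := ∑' nm : ℕ × ℕ, ‖a nm.1 nm.2‖ * ρ ^ (nm.1 + nm.2) with hS
  have hS0 : 0 ≤ S := tsum_nonneg fun nm => by positivity
  obtain ⟨ε, hε, hε'⟩ : ∃ ε : ℝ, 0 < ε ∧ ε < min 1 (ε₀ / (3 * S + 1)) :=
    exists_between (by positivity)
  have hε1 : ε ≤ 1 := hε'.le.trans (min_le_left _ _)
  have hε2 : 3 * ε * S ≤ ε₀ := by
    have := hε'.le.trans (min_le_right _ _)
    rw [le_div_iff₀ (by positivity)] at this
    linarith
  obtain ⟨k', t, P, ht, hP⟩ := exists_real_points hρ hδ hε p hp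
  refine ⟨k', t, ht, ?_⟩
  rw [← hW1]
  apply finrank_le_negIndex _ (Matrix.of fun x y => if x.2 = y.2 then P x.1 y.1 else 0) W
  apply hopen
  rintro ⟨i, x⟩ ⟨j, y⟩
  rw [gram_real_congr hρ hsum t (fun l => (ht l).le.trans hδρ) P
    (Matrix.of fun x y => if x.2 = y.2 then P x.1 y.1 else 0) (fun _ _ => rfl)]
  refine le_trans ?_ hε2
  have hpn : ∀ i n, ‖p i ^ n‖ ≤ ρ ^ n := by
    intro i n
    rw [norm_pow]
    gcongr
    exact (hp i).le
  refine form_close hρ hsum x y (u' := fun n => star (∑ l, (t l ^ n) • P l i))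
    (u := fun n => p i ^ n) (v := fun n => star (p j) ^ n)
    (v' := fun m => ∑ l, (t l ^ m) • P l j) hε.le hε1 (hpn i) ?_ ?_ (hP j)
  · intro n
    rw [← star_pow, Quaternion.norm_star]
    exact hpn j n
  · intro n
    have h := hP i n
    rw [← Quaternion.norm_star, star_sub, star_pow, star_star] at h
    exact h

/-! ### The product kernel -/

theorem bCoef_herm {N : ℕ} (α : ℕ → Matrix (Fin N) (Fin N) ℍ[ℝ])
    (a : ℕ → ℕ → Matrix (Fin N) (Fin N) ℍ[ℝ]) (ha : ∀ n m, a n m = (a m n)ᴴ) (n m : ℕ) :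
    bCoef α a n m = (bCoef α a m n)ᴴ := by
  unfold bCoef
  simp only [Matrix.conjTranspose_sum, Matrix.conjTranspose_mul, Matrix.conjTranspose_conjTranspose]
  rw [Finset.sum_comm]
  refine Finset.sum_congr rfl fun j _ => Finset.sum_congr rfl fun i _ => ?_
  rw [← ha, Matrix.mul_assoc]

theorem bCoef_eq {N : ℕ} (α : ℕ → Matrix (Fin N) (Fin N) ℍ[ℝ])
    (a : ℕ → ℕ → Matrix (Fin N) (Fin N) ℍ[ℝ]) (n m : ℕ) :
    bCoef α a n m = ∑ x ∈ Finset.HasAntidiagonal.antidiagonal n ×ˢ Finset.HasAntidiagonal.antidiagonal m,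
      α x.1.1 * a x.1.2 x.2.2 * (α x.2.1)ᴴ := by
  rw [Finset.sum_product, Finset.Nat.sum_antidiagonal_eq_sum_range_succ_mk]
  unfold bCoef
  refine Finset.sum_congr rfl fun i _ => ?_
  rw [Finset.Nat.sum_antidiagonal_eq_sum_range_succ_mk]

theorem mat_norm_mul_le {N : ℕ} (A B : Matrix (Fin N) (Fin N) ℍ[ℝ]) :
    ‖A * B‖ ≤ N * (‖A‖ * ‖B‖) := by
  refine (Matrix.norm_le_iff (by positivity)).2 fun i j => ?_
  rw [Matrix.mul_apply]
  refine (norm_sum_le _ _).trans ?_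
  refine (Finset.sum_le_card_nsmul _ _ (‖A‖ * ‖B‖) fun l _ => ?_).trans (by simp)
  rw [norm_mul]
  gcongr
  · exact Matrix.norm_entry_le_entrywise_sup_norm _
  · exact Matrix.norm_entry_le_entrywise_sup_norm _

theorem hasSum_cauchy {E : Type*} [AddCommGroup E] [TopologicalSpace E] [IsTopologicalAddGroup E]
    [T3Space E] {F : (ℕ × ℕ) × (ℕ × ℕ) → E} {s : E} (hF : HasSum F s) :
    HasSum (fun nm : ℕ × ℕ => ∑ x ∈ Finset.HasAntidiagonal.antidiagonal nm.1 ×ˢ Finset.HasAntidiagonal.antidiagonal nm.2, F x)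
      s := by
  classical
  let f : (ℕ × ℕ) × (ℕ × ℕ) → ℕ × ℕ := fun x => (x.1.1 + x.1.2, x.2.1 + x.2.2)
  have h1 := (Equiv.sigmaFiberEquiv f).hasSum_iff.2 hF
  refine h1.sigma fun nm => ?_
  have h2 : HasSum (F ∘ ((↑) : {x | f x = nm} → (ℕ × ℕ) × (ℕ × ℕ)))
      (∑ x ∈ Finset.HasAntidiagonal.antidiagonal nm.1 ×ˢ Finset.HasAntidiagonal.antidiagonal nm.2, F x) := by
    rw [hasSum_subtype_iff_indicator]
    have h3 : ∑ x ∈ Finset.HasAntidiagonal.antidiagonal nm.1 ×ˢ Finset.HasAntidiagonal.antidiagonal nm.2, F x =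
        ∑ x ∈ Finset.HasAntidiagonal.antidiagonal nm.1 ×ˢ Finset.HasAntidiagonal.antidiagonal nm.2,
          Set.indicator {x | f x = nm} F x := by
      refine Finset.sum_congr rfl fun x hx => ?_
      rw [Set.indicator_of_mem]
      simp only [Finset.mem_product, Finset.HasAntidiagonal.mem_antidiagonal] at hx
      exact Prod.ext hx.1 hx.2
    rw [h3]
    refine hasSum_sum_of_ne_finset_zero fun x hx => ?_
    rw [Set.indicator_of_notMem]
    intro h
    apply hx
    rw [Set.mem_ofPred_eq] at h
    simp only [Finset.mem_product, Finset.HasAntidiagonal.mem_antidiagonal, ← h, f, and_self]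
  exact h2

/-- Rearrangement of quadruples of indices. -/
def quadEquiv : (ℕ × ℕ) × (ℕ × ℕ) ≃ (ℕ × (ℕ × ℕ)) × ℕ where
  toFun x := ((x.1.1, (x.1.2, x.2.2)), x.2.1)
  invFun y := ((y.1.1, y.1.2.1), (y.2, y.1.2.2))
  left_inv _ := rfl
  right_inv _ := rfl

theorem bCoef_summable {N : ℕ} {a : ℕ → ℕ → Matrix (Fin N) (Fin N) ℍ[ℝ]} {ρ : ℝ} (hρ : 0 < ρ)
    (hsum : Summable fun nm : ℕ × ℕ => ‖a nm.1 nm.2‖ * ρ ^ (nm.1 + nm.2))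
    {α : ℕ → Matrix (Fin N) (Fin N) ℍ[ℝ]} (hαsum : Summable fun n : ℕ => ‖α n‖ * ρ ^ n) :
    Summable fun nm : ℕ × ℕ => ‖bCoef α a nm.1 nm.2‖ * ρ ^ (nm.1 + nm.2) := by
  have h1 := hαsum.mul_of_nonneg hsum (fun n => by positivity) (fun n => by positivity)
  have h2 := h1.mul_of_nonneg hαsum (fun n => by positivity) (fun n => by positivity)
  have h3 := (quadEquiv.summable_iff.2 h2).mul_left ((N : ℝ) * N)
  have h4 := (hasSum_cauchy h3.hasSum).summable
  refine Summable.of_nonneg_of_le (fun nm => by positivity) (fun nm => ?_) h4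
  rw [bCoef_eq]
  refine (mul_le_mul_of_nonneg_right (norm_sum_le _ _) (by positivity)).trans ?_
  rw [Finset.sum_mul]
  refine Finset.sum_le_sum fun x hx => ?_
  simp only [Finset.mem_product, Finset.HasAntidiagonal.mem_antidiagonal] at hx
  rw [← hx.1, ← hx.2]
  simp only [quadEquiv, Equiv.coe_fn_mk, Function.comp]
  calc _ ≤ (N * ((N * (‖α x.1.1‖ * ‖a x.1.2 x.2.2‖)) * ‖α x.2.1‖)) *
          ρ ^ (x.1.1 + x.1.2 + (x.2.1 + x.2.2)) := by
        gcongr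
        refine (mat_norm_mul_le _ _).trans ?_
        rw [Matrix.norm_conjTranspose]
        gcongr
        exact mat_norm_mul_le _ _
    _ = _ := by simp only [pow_add]; ring

section

attribute [local instance] Matrix.normedSpace

theorem mat_complete {N : ℕ} : CompleteSpace (Matrix (Fin N) (Fin N) ℍ[ℝ]) :=
  inferInstanceAs (CompleteSpace (Fin N → Fin N → ℍ[ℝ]))

attribute [local instance] mat_complete

/-- The function `α(s)` at a real point. -/
noncomputable def alphaFun {N : ℕ} (α : ℕ → Matrix (Fin N) (Fin N) ℍ[ℝ]) (s : ℝ) :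
    Matrix (Fin N) (Fin N) ℍ[ℝ] := ∑' n, s ^ n • α n

theorem alpha_bound {N : ℕ} (α : ℕ → Matrix (Fin N) (Fin N) ℍ[ℝ]) {ρ s : ℝ}
    (hs : |s| ≤ ρ) (n : ℕ) : ‖s ^ n • α n‖ ≤ ‖α n‖ * ρ ^ n := by
  rw [norm_smul, norm_pow, mul_comm]
  gcongr
  exact hs

theorem alpha_hasSum {N : ℕ} {α : ℕ → Matrix (Fin N) (Fin N) ℍ[ℝ]} {ρ s : ℝ}
    (hαsum : Summable fun n : ℕ => ‖α n‖ * ρ ^ n) (hs : |s| ≤ ρ) :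
    HasSum (fun n => s ^ n • α n) (alphaFun α s) :=
  (Summable.of_norm_bounded hαsum (alpha_bound α hs)).hasSum

theorem ker_bound {N : ℕ} (a : ℕ → ℕ → Matrix (Fin N) (Fin N) ℍ[ℝ]) {ρ s t : ℝ}
    (hs : |s| ≤ ρ) (ht : |t| ≤ ρ) (nm : ℕ × ℕ) :
    ‖(s ^ nm.1 * t ^ nm.2) • a nm.1 nm.2‖ ≤ ‖a nm.1 nm.2‖ * ρ ^ (nm.1 + nm.2) := by
  rw [norm_smul, norm_mul, norm_pow, norm_pow, mul_comm, pow_add]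
  have := (abs_nonneg s).trans hs
  gcongr
  · exact hs
  · exact ht

theorem ker_hasSum {N : ℕ} {a : ℕ → ℕ → Matrix (Fin N) (Fin N) ℍ[ℝ]} {ρ s t : ℝ}
    (hsum : Summable fun nm : ℕ × ℕ => ‖a nm.1 nm.2‖ * ρ ^ (nm.1 + nm.2))
    (hs : |s| ≤ ρ) (ht : |t| ≤ ρ) :
    HasSum (fun nm : ℕ × ℕ => (s ^ nm.1 * t ^ nm.2) • a nm.1 nm.2) (kerK a s t) := by
  have h := (Summable.of_norm_bounded hsum (ker_bound a hs ht)).hasSum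
  have h2 : kerK a s t = ∑' nm : ℕ × ℕ, (s ^ nm.1 * t ^ nm.2) • a nm.1 nm.2 := by
    apply Matrix.ext
    intro i j
    have h3 := Pi.hasSum.1 (Pi.hasSum.1 h i) j
    refine Eq.trans ?_ h3.tsum_eq
    unfold kerK
    refine tsum_congr fun nm => ?_
    rw [Quaternion.star_coe, ← Quaternion.coe_pow, ← Quaternion.coe_pow,
      Quaternion.coe_mul_eq_smul, Quaternion.mul_coe_eq_smul, smul_smul, mul_comm]
    rfl
  rw [h2]
  exact h

theorem ker_mul {N : ℕ} {a : ℕ → ℕ → Matrix (Fin N) (Fin N) ℍ[ℝ]} {ρ s t : ℝ} (hρ : 0 < ρ)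
    (hsum : Summable fun nm : ℕ × ℕ => ‖a nm.1 nm.2‖ * ρ ^ (nm.1 + nm.2))
    {α : ℕ → Matrix (Fin N) (Fin N) ℍ[ℝ]} (hαsum : Summable fun n : ℕ => ‖α n‖ * ρ ^ n)
    (hs : |s| ≤ ρ) (ht : |t| ≤ ρ) :
    kerK (bCoef α a) s t = alphaFun α s * kerK a s t * (alphaFun α t)ᴴ := by
  have hb := ker_hasSum (bCoef_summable hρ hsum hαsum) hs ht
  have A := alpha_hasSum hαsum hs
  have A' := (alpha_hasSum hαsum ht).matrix_conjTranspose
  have K := ker_hasSum hsum hs ht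
  have s1 := hαsum.mul_of_nonneg hsum (fun n => by positivity) (fun n => by positivity)
  have s2 := s1.mul_of_nonneg hαsum (fun n => by positivity) (fun n => by positivity)
  have b1 : ∀ x : ℕ × (ℕ × ℕ), ‖(s ^ x.1 • α x.1) * ((s ^ x.2.1 * t ^ x.2.2) • a x.2.1 x.2.2)‖ ≤
      N * ((‖α x.1‖ * ρ ^ x.1) * (‖a x.2.1 x.2.2‖ * ρ ^ (x.2.1 + x.2.2))) := by
    intro x
    refine (mat_norm_mul_le _ _).trans ?_
    gcongr
    · exact alpha_bound α hs _
    · exact ker_bound a hs ht x.2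
  have AK := A.mul K (Summable.of_norm_bounded (s1.mul_left (N : ℝ)) b1)
  have AKA := AK.mul A' (Summable.of_norm_bounded (s2.mul_left ((N : ℝ) * N)) (fun y => by
    refine (mat_norm_mul_le _ _).trans ?_
    rw [Matrix.norm_conjTranspose, mul_assoc]
    gcongr (N : ℝ) * ?_
    rw [← mul_assoc]
    gcongr
    · exact b1 _
    · exact alpha_bound α ht _))
  have h := hasSum_cauchy (quadEquiv.hasSum_iff.2 AKA)
  refine hb.unique ((congrArg (fun f => HasSum f _) (funext fun nm => ?_)).mp h)
  rw [bCoef_eq, Finset.smul_sum]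
  refine Finset.sum_congr rfl fun x hx => ?_
  simp only [Finset.mem_product, Finset.HasAntidiagonal.mem_antidiagonal] at hx
  rw [← hx.1, ← hx.2]
  have hst : (t ^ x.2.1 • α x.2.1)ᴴ = t ^ x.2.1 • (α x.2.1)ᴴ := by
    apply Matrix.ext
    intro i j
    simp only [Matrix.conjTranspose_apply, Matrix.smul_apply, Quaternion.star_smul]
  simp only [quadEquiv, Equiv.coe_fn_mk, Function.comp, hst,
    Matrix.smul_mul, Matrix.mul_smul, smul_smul]
  congr 1
  ring

theorem ring_isUnit_eventually {R : Type*} [NormedRing R] [CompleteSpace R] (A : R)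
    (hA : IsUnit A) : ∀ᶠ B in nhds A, IsUnit B :=
  (Units.isOpen (R := R)).mem_nhds hA

theorem isUnit_eventually {N : ℕ} (A : Matrix (Fin N) (Fin N) ℍ[ℝ]) (hA : IsUnit A) :
    ∀ᶠ B in nhds A, IsUnit B := by
  exact @ring_isUnit_eventually _ Matrix.linftyOpNormedRing mat_complete A hA

theorem alpha_unit {N : ℕ} {ρ : ℝ} (hρ : 0 < ρ)
    {α : ℕ → Matrix (Fin N) (Fin N) ℍ[ℝ]} (hαsum : Summable fun n : ℕ => ‖α n‖ * ρ ^ n)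
    (hα0 : IsUnit (α 0)) : ∃ δ > 0, δ ≤ ρ ∧ ∀ s : ℝ, |s| < δ → IsUnit (alphaFun α s) := by
  have h0 : alphaFun α 0 = α 0 := by
    unfold alphaFun
    rw [tsum_eq_single 0]
    · simp
    · intro n hn
      simp [hn]
  have hc : ContinuousOn (alphaFun α) (Metric.closedBall 0 ρ) := by
    apply continuousOn_tsum (fun n => by fun_prop) hαsum
    intro n s hs
    apply alpha_bound
    simpa using hs
  have hc0 : ContinuousAt (alphaFun α) 0 := hc.continuousAt (Metric.closedBall_mem_nhds _ hρ)
  have hev : ∀ᶠ s in nhds (0 : ℝ), IsUnit (alphaFun α s) :=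
    hc0.eventually (by rw [h0]; exact isUnit_eventually _ hα0)
  obtain ⟨δ, hδ, h⟩ := Metric.eventually_nhds_iff.1 hev
  refine ⟨min δ ρ, by positivity, min_le_right _ _, fun s hs => h ?_⟩
  rw [Real.dist_eq, sub_zero]
  exact hs.trans_le (min_le_left _ _)

end

theorem gram_block_le {N k : ℕ} (K K' : ℍ[ℝ] → ℍ[ℝ] → Matrix (Fin N) (Fin N) ℍ[ℝ])
    (p : Fin k → ℍ[ℝ]) (M : Fin k → Matrix (Fin N) (Fin N) ℍ[ℝ])
    (h : ∀ l l', K' (p l) (p l') = M l * K (p l) (p l') * (M l')ᴴ) :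
    negIndex (_root_.gram K' p) ≤ negIndex (_root_.gram K p) := by
  let D : Matrix (Fin k × Fin N) (Fin k × Fin N) ℍ[ℝ] :=
    Matrix.of fun x y => if x.1 = y.1 then star (M y.1 y.2 x.2) else 0
  have hD : ∀ x y, D x y = if x.1 = y.1 then star (M y.1 y.2 x.2) else 0 := fun _ _ => rfl
  have : _root_.gram K' p = Dᴴ * _root_.gram K p * D := by
    apply Matrix.ext
    rintro ⟨l, x⟩ ⟨l', y⟩
    simp only [Matrix.mul_apply, Matrix.conjTranspose_apply, Fintype.sum_prod_type, _root_.gram,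
      hD, h]
    rw [Finset.sum_eq_single l' (fun b _ hb => by simp [hb]) (by simp)]
    refine Finset.sum_congr rfl fun z _ => ?_
    rw [Finset.sum_eq_single l (fun b _ hb => by simp [hb]) (by simp)]
    simp
  rw [this]
  exact negIndex_congr_le _ _

theorem hasNegSquares_of_le {N : ℕ} {a b : ℕ → ℕ → Matrix (Fin N) (Fin N) ℍ[ℝ]} {ρ : ℝ} {κ : ℕ}
    (h1 : ∀ (k : ℕ) (p : Fin k → ℍ[ℝ]), (∀ i, ‖p i‖ < ρ) →
      ∃ (k' : ℕ) (q : Fin k' → ℍ[ℝ]), (∀ i, ‖q i‖ < ρ) ∧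
        negIndex (_root_.gram (kerK a) p) ≤ negIndex (_root_.gram (kerK b) q))
    (h2 : ∀ (k : ℕ) (p : Fin k → ℍ[ℝ]), (∀ i, ‖p i‖ < ρ) →
      ∃ (k' : ℕ) (q : Fin k' → ℍ[ℝ]), (∀ i, ‖q i‖ < ρ) ∧
        negIndex (_root_.gram (kerK b) p) ≤ negIndex (_root_.gram (kerK a) q))
    (h : hasNegSquares b ρ κ) : hasNegSquares a ρ κ := by
  obtain ⟨hle, k, p, hp, heq⟩ := h
  have hle' : ∀ (k : ℕ) (p : Fin k → ℍ[ℝ]), (∀ i, ‖p i‖ < ρ) →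
      negIndex (_root_.gram (kerK a) p) ≤ κ := by
    intro k p hp
    obtain ⟨k', q, hq, hpq⟩ := h1 k p hp
    exact hpq.trans (hle k' q hq)
  obtain ⟨k', q, hq, hpq⟩ := h2 k p hp
  exact ⟨hle', k', q, hq, le_antisymm (hle' k' q hq) (heq ▸ hpq)⟩

/-- **Proposition**: multiplying a Hermitian kernel `K(p,q) = Σ pⁿ a_{n,m} q̄^m` by a
slice hyperholomorphic function `α(p) = Σ pⁿ αₙ` with `α₀ invertible`, i.e. forming
`B(p,q) = α(p) ⋆ K(p,q) ⋆_r α(q)*` with coefficients `b_{n,m}`, preserves hermitianity,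
convergence, and the number of negative squares in `B_ρ`. -/
theorem negSquares_mul_invertible {N : ℕ}
    (a : ℕ → ℕ → Matrix (Fin N) (Fin N) ℍ[ℝ])
    (ha : ∀ n m, a n m = (a m n)ᴴ) (ρ : ℝ) (hρ : 0 < ρ)
    (hsum : Summable fun nm : ℕ × ℕ => ‖a nm.1 nm.2‖ * ρ ^ (nm.1 + nm.2))
    (α : ℕ → Matrix (Fin N) (Fin N) ℍ[ℝ])
    (hαsum : Summable fun n : ℕ => ‖α n‖ * ρ ^ n)
    (hα0 : IsUnit (α 0)) :
    (∀ n m, bCoef α a n m = (bCoef α a m n)ᴴ) ∧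
    (Summable fun nm : ℕ × ℕ => ‖bCoef α a nm.1 nm.2‖ * ρ ^ (nm.1 + nm.2)) ∧
    ∀ κ : ℕ, (hasNegSquares (bCoef α a) ρ κ ↔ hasNegSquares a ρ κ) := by
  obtain ⟨δ, hδ, hδρ, hunit⟩ := alpha_unit hρ hαsum hα0
  have hbsum := bCoef_summable hρ hsum hαsum
  have hnorm : ∀ {k : ℕ} {t : Fin k → ℝ}, (∀ l, |t l| < δ) → ∀ l, ‖((t l : ℝ) : ℍ[ℝ])‖ < ρ := by
    intro k t ht l
    rw [Quaternion.norm_coe]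
    exact (ht l).trans_le hδρ
  have hab : ∀ (k : ℕ) (p : Fin k → ℍ[ℝ]), (∀ i, ‖p i‖ < ρ) →
      ∃ (k' : ℕ) (q : Fin k' → ℍ[ℝ]), (∀ i, ‖q i‖ < ρ) ∧
        negIndex (_root_.gram (kerK a) p) ≤ negIndex (_root_.gram (kerK (bCoef α a)) q) := by
    intro k p hp
    obtain ⟨k', t, ht, hle⟩ := exists_real_gram hρ hsum hδ hδρ p hp
    refine ⟨k', fun l => (t l : ℍ[ℝ]), hnorm ht, hle.trans ?_⟩
    choose B hB using fun l => (hunit (t l) (ht l)).exists_left_inv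
    refine gram_block_le _ _ _ B fun l l' => ?_
    rw [ker_mul hρ hsum hαsum ((ht l).le.trans hδρ) ((ht l').le.trans hδρ)]
    calc kerK a (t l) (t l') = (B l * alphaFun α (t l)) * kerK a (t l) (t l') *
          (B l' * alphaFun α (t l'))ᴴ := by rw [hB, hB]; simp
      _ = _ := by rw [Matrix.conjTranspose_mul]; simp only [Matrix.mul_assoc]
  have hba : ∀ (k : ℕ) (p : Fin k → ℍ[ℝ]), (∀ i, ‖p i‖ < ρ) →
      ∃ (k' : ℕ) (q : Fin k' → ℍ[ℝ]), (∀ i, ‖q i‖ < ρ) ∧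
        negIndex (_root_.gram (kerK (bCoef α a)) p) ≤ negIndex (_root_.gram (kerK a) q) := by
    intro k p hp
    obtain ⟨k', t, ht, hle⟩ := exists_real_gram hρ hbsum hδ hδρ p hp
    refine ⟨k', fun l => (t l : ℍ[ℝ]), hnorm ht, hle.trans ?_⟩
    exact gram_block_le _ _ _ (fun l => alphaFun α (t l)) fun l l' =>
      ker_mul hρ hsum hαsum ((ht l).le.trans hδρ) ((ht l').le.trans hδρ)
  exact ⟨bCoef_herm α a ha, hbsum, fun κ =>
    ⟨hasNegSquares_of_le hab hba, hasNegSquares_of_le hba hab⟩⟩
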